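/- Assume: ‖H‖ ≤ K_H; |f1 - f0 - ⟨g, η⟩ - (1/2)⟨A η, η⟩| ≤ (L_H/2)‖η‖³; G = g exactly; ‖(H - A) η‖ ≤ δ_H ‖η‖; σ ≥ 2 L_H; η^C := -α G where α ≥ 0 is a global minimizer of t ↦ m(-t G) over t ≥ 0; m(η) ≤ m(η^C); ‖G‖ > ε_g; and δ_H ≤ min{1/12, (1-ρ_TH)/6} · (√(K_H² + 4σ ε_g) - K_H). Then f0 - f1 ≥ ρ_TH · (-m(η)). (The success criterion underlying Corollary 3.2, case of a large inexact gradient with exact gradient information.) -/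

import Mathlib

open RealInnerProductSpace

/-!
Let `s` be the positive root of `σ * s ^ 2 + K * s = ε`. The steepest-descent step of length `s`
already lowers the cubic model by `(2 / 3) * σ * s ^ 3`, hence so does `η`. Since `2 * L ≤ σ`, the
actual decrease falls short of the model decrease by at most
`(δ / 2) * ‖η‖ ^ 2 - (σ / 12) * ‖η‖ ^ 3`. If `s ≤ ‖η‖`, this is nonpositive because `δ ≤ σ * s / 6`;
if `‖η‖ ≤ s`, it is at most `(1 - ρ) * σ * s ^ 3 / 6`, a quarter of the allowed loss
`(1 - ρ) * (2 / 3) * σ * s ^ 3`.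
-/

section CubicModel

variable {E : Type*} [SeminormedAddCommGroup E] [InnerProductSpace ℝ E]
  {G η : E} {H A : E →L[ℝ] E} {σ L K δ ε : ℝ}

/-- The cubic-regularized second-order model with gradient `G`, Hessian `H` and regularization
parameter `σ`, normalized to vanish at the origin. -/
noncomputable def cubicModel (G : E) (H : E →L[ℝ] E) (σ : ℝ) (ξ : E) : ℝ :=
  ⟪G, ξ⟫ + (1 / 2) * ⟪H ξ, ξ⟫ + (σ / 3) * ‖ξ‖ ^ 3

/-- The larger root `s` of `σ * s ^ 2 + K * s = ε`: the length of a steepest-descent step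
guaranteed to decrease the cubic model when `‖H‖ ≤ K` and `ε ≤ ‖G‖`. Meaningful for `0 < σ` and
`0 ≤ ε`; it is `0` by convention when `σ = 0`. -/
noncomputable def cauchyRadius (σ K ε : ℝ) : ℝ :=
  (√(K ^ 2 + 4 * σ * ε) - K) / (2 * σ)

lemma two_mul_mul_cauchyRadius (hσ : σ ≠ 0) :
    2 * σ * cauchyRadius σ K ε = √(K ^ 2 + 4 * σ * ε) - K :=
  mul_div_cancel₀ _ (by positivity)

lemma cauchyRadius_nonneg (hσ : 0 ≤ σ) (hε : 0 ≤ ε) : 0 ≤ cauchyRadius σ K ε := by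
  have hK : K ≤ √(K ^ 2 + 4 * σ * ε) := Real.le_sqrt_of_sq_le (by
    linarith [mul_nonneg hσ hε])
  exact div_nonneg (sub_nonneg.mpr hK) (by positivity)

lemma mul_cauchyRadius_sq_add (hσ : 0 < σ) (hε : 0 ≤ ε) :
    σ * cauchyRadius σ K ε ^ 2 + K * cauchyRadius σ K ε = ε := by
  have hdiscrim : discrim σ K (-ε) = √(K ^ 2 + 4 * σ * ε) * √(K ^ 2 + 4 * σ * ε) := by
    rw [Real.mul_self_sqrt (by positivity), discrim]
    ring
  have hroot := (quadratic_eq_zero_iff hσ.ne' hdiscrim (cauchyRadius σ K ε)).mpr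
    (Or.inl (by rw [cauchyRadius, neg_add_eq_sub]))
  linarith

lemma abs_real_inner_le_mul_norm_sq {x y : E} {c : ℝ} (h : ‖y‖ ≤ c * ‖x‖) :
    |⟪y, x⟫| ≤ c * ‖x‖ ^ 2 :=
  calc |⟪y, x⟫| ≤ ‖y‖ * ‖x‖ := abs_real_inner_le_norm y x
    _ ≤ c * ‖x‖ * ‖x‖ := by gcongr
    _ = c * ‖x‖ ^ 2 := by ring

lemma cubicModel_neg_smul_le (hHK : ‖H‖ ≤ K) {t : ℝ} (ht : 0 ≤ t) :
    cubicModel G H σ (-(t • G)) ≤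
      -(t * ‖G‖ * ‖G‖) + K / 2 * (t * ‖G‖) ^ 2 + σ / 3 * (t * ‖G‖) ^ 3 := by
  have hnorm : ‖-(t • G)‖ = t * ‖G‖ := by
    rw [norm_neg, norm_smul, Real.norm_of_nonneg ht]
  have hlinear : ⟪G, -(t • G)⟫ = -(t * ‖G‖ * ‖G‖) := by
    rw [inner_neg_right, real_inner_smul_right, real_inner_self_eq_norm_mul_norm, mul_assoc]
  have hquadratic : ⟪H (-(t • G)), -(t • G)⟫ ≤ K * (t * ‖G‖) ^ 2 :=
    hnorm ▸ (abs_le.mp (abs_real_inner_le_mul_norm_sq (H.le_of_opNorm_le hHK _))).2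
  rw [cubicModel, hlinear, hnorm]
  linarith

lemma cubicModel_cauchyRadius_le (hσ : 0 < σ) (hε : 0 < ε) (hHK : ‖H‖ ≤ K) (hG : ε ≤ ‖G‖) :
    cubicModel G H σ (-((cauchyRadius σ K ε / ‖G‖) • G)) ≤
      -(2 / 3 * σ * cauchyRadius σ K ε ^ 3) := by
  have hs : 0 ≤ cauchyRadius σ K ε := cauchyRadius_nonneg hσ.le hε.le
  have hroot : σ * cauchyRadius σ K ε ^ 2 + K * cauchyRadius σ K ε = ε :=
    mul_cauchyRadius_sq_add hσ hε.le
  have hK : 0 ≤ K := (norm_nonneg H).trans hHK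
  have hstep := cubicModel_neg_smul_le (G := G) (σ := σ) hHK (div_nonneg hs (norm_nonneg G))
  rw [div_mul_cancel₀ _ (hε.trans_le hG).ne'] at hstep
  set s := cauchyRadius σ K ε
  calc cubicModel G H σ (-((s / ‖G‖) • G))
      ≤ -(s * ‖G‖) + K / 2 * s ^ 2 + σ / 3 * s ^ 3 := hstep
    _ ≤ -(s * (σ * s ^ 2 + K * s)) + K / 2 * s ^ 2 + σ / 3 * s ^ 3 := by
        rw [hroot]
        gcongr
    _ = -(2 / 3 * σ * s ^ 3) - K / 2 * s ^ 2 := by ring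
    _ ≤ -(2 / 3 * σ * s ^ 3) := sub_le_self _ (by positivity)

lemma sub_le_cubicModel_add {f0 f1 : ℝ}
    (hTaylor : f1 - f0 - ⟪G, η⟫ - (1 / 2) * ⟪A η, η⟫ ≤ (L / 2) * ‖η‖ ^ 3)
    (hHA : ‖(H - A) η‖ ≤ δ * ‖η‖) :
    f1 - f0 ≤ cubicModel G H σ η + (L / 2 - σ / 3) * ‖η‖ ^ 3 + δ / 2 * ‖η‖ ^ 2 := by
  have hinexact : -(δ * ‖η‖ ^ 2) ≤ ⟪H η, η⟫ - ⟪A η, η⟫ := by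
    rw [← inner_sub_left, ← sub_apply]
    exact (abs_le.mp (abs_real_inner_le_mul_norm_sq hHA)).1
  rw [cubicModel]
  linarith

lemma mul_sq_le_mul_cube_add_mul_cube {a b r s : ℝ} (ha : 0 ≤ a) (hb : 0 ≤ b) (hr : 0 ≤ r)
    (hs : 0 ≤ s) (hδ : δ ≤ min a b * s) : δ * r ^ 2 ≤ a * r ^ 3 + b * s ^ 3 := by
  rcases le_total s r with hsr | hrs
  · calc δ * r ^ 2 ≤ min a b * s * r ^ 2 := by gcongr
      _ ≤ a * r * r ^ 2 := by gcongr; exact min_le_left a b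
      _ = a * r ^ 3 := by ring
      _ ≤ a * r ^ 3 + b * s ^ 3 := le_add_of_nonneg_right (by positivity)
  · calc δ * r ^ 2 ≤ min a b * s * r ^ 2 := by gcongr
      _ ≤ b * s * s ^ 2 := by gcongr; exact min_le_right a b
      _ = b * s ^ 3 := by ring
      _ ≤ a * r ^ 3 + b * s ^ 3 := le_add_of_nonneg_left (by positivity)

theorem success_criterion_gradient_case_exact_gradient_general {ρ f0 f1 : ℝ}
    (hσ : 0 < σ) (hε : 0 < ε) (hρ : ρ ≤ 1) (hHK : ‖H‖ ≤ K)
    (hTaylor : f1 - f0 - ⟪G, η⟫ - (1 / 2) * ⟪A η, η⟫ ≤ (L / 2) * ‖η‖ ^ 3)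
    (hHA : ‖(H - A) η‖ ≤ δ * ‖η‖) (hσL : 2 * L ≤ σ)
    (hCauchy : ∀ t : ℝ, 0 ≤ t → cubicModel G H σ η ≤ cubicModel G H σ (-(t • G)))
    (hG : ε ≤ ‖G‖)
    (hδ : δ ≤ min (1 / 12) ((1 - ρ) / 6) * (√(K ^ 2 + 4 * σ * ε) - K)) :
    ρ * (-cubicModel G H σ η) ≤ f0 - f1 := by
  have hs : 0 ≤ cauchyRadius σ K ε := cauchyRadius_nonneg hσ.le hε.le
  have hρ' : 0 ≤ 1 - ρ := sub_nonneg.mpr hρ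
  have hdecrease : cubicModel G H σ η ≤ -(2 / 3 * σ * cauchyRadius σ K ε ^ 3) :=
    (hCauchy _ (by positivity)).trans (cubicModel_cauchyRadius_le hσ hε hHK hG)
  rw [← two_mul_mul_cauchyRadius hσ.ne', ← mul_assoc,
    min_mul_of_nonneg _ _ (by positivity)] at hδ
  set s := cauchyRadius σ K ε
  have hhessian : δ * ‖η‖ ^ 2 ≤
      1 / 12 * (2 * σ) * ‖η‖ ^ 3 + (1 - ρ) / 6 * (2 * σ) * s ^ 3 :=
    mul_sq_le_mul_cube_add_mul_cube (by positivity) (by positivity) (norm_nonneg η) hs hδ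
  have hactual := sub_le_cubicModel_add (σ := σ) hTaylor hHA
  have hcubic : L / 2 * ‖η‖ ^ 3 ≤ σ / 4 * ‖η‖ ^ 3 :=
    mul_le_mul_of_nonneg_right (by linarith) (by positivity)
  have hloss : (1 - ρ) * (2 / 3 * σ * s ^ 3) ≤ (1 - ρ) * (-cubicModel G H σ η) :=
    mul_le_mul_of_nonneg_left (le_neg_of_le_neg hdecrease) hρ'
  have hslack : 0 ≤ (1 - ρ) * (σ * s ^ 3) := by positivity
  linarith

end CubicModel

/-- The success criterion underlying Corollary 3.2, large-gradient case
with exact gradient information. -/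
theorem success_criterion_gradient_case_exact_gradient
    {E : Type*} [NormedAddCommGroup E] [InnerProductSpace ℝ E] [FiniteDimensional ℝ E]
    (G g η : E) (H A : E →L[ℝ] E) (hH : IsSelfAdjoint H) (hA : IsSelfAdjoint A)
    (σ L_H K_H δ_H ε_g ρ_TH : ℝ) (hσ : 0 < σ) (hL : 0 < L_H) (hK : 0 < K_H)
    (hδH : δ_H ∈ Set.Ioo (0 : ℝ) 1)
    (hεg : ε_g ∈ Set.Ioo (0 : ℝ) 1) (hρ : ρ_TH ∈ Set.Ioo (0 : ℝ) 1)
    (m : E → ℝ)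
    (hm : ∀ ξ : E, m ξ = ⟪G, ξ⟫ + (1 / 2) * ⟪H ξ, ξ⟫ + (σ / 3) * ‖ξ‖ ^ 3)
    (f0 f1 : ℝ)
    (hHK : ‖H‖ ≤ K_H)
    (hTaylor : |f1 - f0 - ⟪g, η⟫ - (1 / 2) * ⟪A η, η⟫| ≤ (L_H / 2) * ‖η‖ ^ 3)
    (hGg : G = g)
    (hHa : ‖(H - A) η‖ ≤ δ_H * ‖η‖)
    (hσL : σ ≥ 2 * L_H)
    (α : ℝ) (hα : 0 ≤ α)
    (hmin : ∀ t : ℝ, 0 ≤ t → m (-(α • G)) ≤ m (-(t • G)))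
    (ηC : E) (hηC : ηC = -(α • G))
    (hmη : m η ≤ m ηC)
    (hGbig : ‖G‖ > ε_g)
    (hδHsmall : δ_H ≤ min (1 / 12) ((1 - ρ_TH) / 6) * (Real.sqrt (K_H ^ 2 + 4 * σ * ε_g) - K_H)) :
    f0 - f1 ≥ ρ_TH * (-m η) := by
  obtain rfl : m = cubicModel G H σ := funext hm
  subst hGg hηC
  exact success_criterion_gradient_case_exact_gradient_general hσ hεg.1 hρ.2.le hHK
    (abs_le.mp hTaylor).2 hHa hσL (fun t ht ↦ hmη.trans (hmin t ht)) hGbig.le hδHsmall
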